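/- For every parameter α = (α_0, …, α_4) ∈ ℂ^5 and every quadruple (a, b, c, d) ∈ ℂ^4, there exists a unique formal meromorphic solution (c_n^i) of the A_4^(1) system at t_0 of pole order 1 with residue vector (c_{−1}^0, …, c_{−1}^4) = (−1, 0, 1, 0, 0) and with c_0^0 = a, c_0^2 = b, c_0^3 = c, c_2^1 = d. Moreover every formal meromorphic solution of pole order 1 with this residue vector satisfies c_0^1 = 0, c_0^4 − c_0^0 = c_0^3 − c_0^2, and c_1^1 = −α_1. -/

import Mathlib

/-!
Separating the two terms of the recurrence that involve `cₙ` from the others, one sees that, with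
residue vector `(−1, 0, 1, 0, 0)`, the coefficient vector `cₙ` for `n ≥ 0` solves a linear system
whose right-hand side `restA4` depends only on `c₀, …, cₙ₋₁` (`formal_iff_level`). Its matrix has
determinant `(n − 2) n² · n (n + 2)`, so the resonances with `n ≥ 0` are
`n = 0` and `n = 2`.

* For `n = 0` the system is homogeneous of rank two, and its solutions are
  `c₀¹ = 0`, `c₀⁴ − c₀⁰ = c₀³ − c₀²`.
* For `n = 1` the second equation gives `c₁¹ = −α₁`.
* For `n = 2` the second equation reads `0 = c₀¹ G₁¹ + c₁¹ G₀¹`; this holds because `c₀¹ = 0` and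
  `G₀¹ = c₀² − c₀³ + c₀⁴ − c₀⁰ = 0`, so that `c₂¹` is free.
* For all other `n ≥ 1` the system is uniquely solvable.

Uniqueness is then a strong induction on `n`; the solution itself is the limit of the sequence
`approxA4` of truncations, each of which adds one coefficient vector to the previous one.
-/

/-- A formal meromorphic solution of the `A₄⁽¹⁾` system
`fᵢ' = fᵢ (fᵢ₊₁ − fᵢ₊₂ + fᵢ₊₃ − fᵢ₊₄) + αᵢ` (indices mod 5) at a point `t₀`,
of pole order `r ≥ 1`: a family of coefficients `c i n` (`i : Fin 5`, `n : ℤ`)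
vanishing for `n < -r`, with nonzero leading vector, satisfying the formal
Laurent-series recurrence `n cₙⁱ = Σ_{k=-r}^{n+r-1} cₖⁱ G_{n-k-1}ⁱ + δ_{n,1} αᵢ`
where `Gₙⁱ = cₙ^{i+1} − cₙ^{i+2} + cₙ^{i+3} − cₙ^{i+4}`. -/
def IsFormalMeromSolA4 (α : Fin 5 → ℂ) (r : ℤ) (c : Fin 5 → ℤ → ℂ) : Prop :=
  1 ≤ r ∧
  (∃ i : Fin 5, c i (-r) ≠ 0) ∧
  (∀ (i : Fin 5) (n : ℤ), n < -r → c i n = 0) ∧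
  ∀ (i : Fin 5) (n : ℤ),
    (n : ℂ) * c i n =
      (∑ k ∈ Finset.Icc (-r) (n + r - 1),
        c i k * (c (i + 1) (n - k - 1) - c (i + 2) (n - k - 1) +
          c (i + 3) (n - k - 1) - c (i + 4) (n - k - 1))) +
      (if n = 1 then α i else 0)

/-- The part of the right-hand side of the recurrence for `cₙⁱ` (pole order 1) that involves only
the coefficients of index `0, …, n - 1`. -/
noncomputable def restA4 (α : Fin 5 → ℂ) (c : Fin 5 → ℤ → ℂ) (i : Fin 5) (n : ℤ) : ℂ :=
  (∑ k ∈ Finset.Icc 0 (n - 1),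
    c i k * (c (i + 1) (n - k - 1) - c (i + 2) (n - k - 1) +
      c (i + 3) (n - k - 1) - c (i + 4) (n - k - 1))) +
  (if n = 1 then α i else 0)

/-- The linear system for the coefficient vector `x = cₙ` with right-hand side `R`, for the residue
vector `(−1, 0, 1, 0, 0)`. -/
def LevelA4 (n : ℤ) (x R : Fin 5 → ℂ) : Prop :=
  ((n : ℂ) + 1) * x 0 + (x 1 - x 2 + x 3 - x 4) = R 0 ∧
  ((n : ℂ) - 2) * x 1 = R 1 ∧
  ((n : ℂ) + 1) * x 2 - (x 3 - x 4 + x 0 - x 1) = R 2 ∧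
  (n : ℂ) * x 3 = R 3 ∧
  (n : ℂ) * x 4 = R 4

lemma restA4_congr {α : Fin 5 → ℂ} {c c' : Fin 5 → ℤ → ℂ} {n : ℤ}
    (h : ∀ i k, 0 ≤ k → k < n → c i k = c' i k) (i : Fin 5) :
    restA4 α c i n = restA4 α c' i n := by
  unfold restA4
  congr 1
  refine Finset.sum_congr rfl fun k hk => ?_
  rw [Finset.mem_Icc] at hk
  have h1 : 0 ≤ n - k - 1 := by omega
  have h2 : n - k - 1 < n := by omega
  rw [h i k (by omega) (by omega), h _ _ h1 h2, h _ _ h1 h2, h _ _ h1 h2, h _ _ h1 h2]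

lemma sum_split (f : ℤ → ℂ) {n : ℤ} (hn : 0 ≤ n) :
    ∑ k ∈ Finset.Icc (-1) n, f k = f (-1) + f n + ∑ k ∈ Finset.Icc 0 (n - 1), f k := by
  have h : Finset.Icc (-1) n = insert (-1) (insert n (Finset.Icc 0 (n - 1))) := by
    ext k
    simp only [Finset.mem_insert, Finset.mem_Icc]
    omega
  rw [h, Finset.sum_insert, Finset.sum_insert, add_assoc]
  · simp
  · simp only [Finset.mem_insert, Finset.mem_Icc]
    omega

/-- For a family with simple pole and residue vector `(−1, 0, 1, 0, 0)`, being a formal solution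
amounts to the linear systems `LevelA4` for all `n ≥ 0`: the recurrence holds automatically for
negative `n`. -/
lemma formal_iff_level {α : Fin 5 → ℂ} {c : Fin 5 → ℤ → ℂ}
    (h0 : c 0 (-1) = -1) (h1 : c 1 (-1) = 0) (h2 : c 2 (-1) = 1) (h3 : c 3 (-1) = 0)
    (h4 : c 4 (-1) = 0) :
    IsFormalMeromSolA4 α 1 c ↔
      (∀ i n, n < -1 → c i n = 0) ∧
      ∀ n, 0 ≤ n → LevelA4 n (fun i => c i n) (fun i => restA4 α c i n) := by
  have key : ∀ n : ℤ, 0 ≤ n →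
      ((∀ i : Fin 5, (n : ℂ) * c i n =
      (∑ k ∈ Finset.Icc (-1) (n + 1 - 1),
        c i k * (c (i + 1) (n - k - 1) - c (i + 2) (n - k - 1) +
          c (i + 3) (n - k - 1) - c (i + 4) (n - k - 1))) +
      (if n = 1 then α i else 0)) ↔ LevelA4 n (fun i => c i n) (fun i => restA4 α c i n)) := by
    intro n hn
    have e (i : Fin 5) : (∑ k ∈ Finset.Icc (-1) (n + 1 - 1),
        c i k * (c (i + 1) (n - k - 1) - c (i + 2) (n - k - 1) +
          c (i + 3) (n - k - 1) - c (i + 4) (n - k - 1))) +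
        (if n = 1 then α i else 0) =
        c i (-1) * (c (i + 1) n - c (i + 2) n + c (i + 3) n - c (i + 4) n) +
        c i n * (c (i + 1) (-1) - c (i + 2) (-1) + c (i + 3) (-1) - c (i + 4) (-1)) +
        restA4 α c i n := by
      rw [add_sub_cancel_right, sum_split _ hn, restA4, show n - -1 - 1 = n by ring,
        show n - n - 1 = -1 by ring]
      ring
    simp only [e]
    have f0 : ∀ P : Fin 5 → Prop, (∀ i, P i) ↔ P 0 ∧ P 1 ∧ P 2 ∧ P 3 ∧ P 4 := by
      intro P
      simp [Fin.forall_fin_succ]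
    rw [f0]
    simp only [LevelA4, Fin.reduceAdd, zero_add, h0, h1, h2, h3, h4]
    refine and_congr ?_ (and_congr ?_ (and_congr ?_ (and_congr ?_ ?_))) <;>
      constructor <;> intro h <;> linear_combination h
  constructor
  · rintro ⟨-, -, hs, hr⟩
    exact ⟨hs, fun n hn => (key n hn).1 fun i => hr i n⟩
  · rintro ⟨hs, hr⟩
    refine ⟨le_rfl, ⟨2, by simp [h2]⟩, hs, fun i n => ?_⟩
    rcases lt_trichotomy n (-1) with hn | rfl | hn
    · rw [hs i n hn, Finset.Icc_eq_empty (by omega), if_neg (by omega)]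
      simp
    · fin_cases i <;> simp [h0, h1, h2, h3, h4]
    · exact (key n (by omega)).2 (hr n (by omega)) i

/-- The solution of the system `LevelA4 n x R` for `n ≥ 1`, by Cramer's rule, with `d` as the value
of the free coordinate `x 1` when `n = 2`. -/
noncomputable def solveA4 (n : ℤ) (R : Fin 5 → ℂ) (d : ℂ) : Fin 5 → ℂ :=
  let x1 := if n = 2 then d else R 1 / ((n : ℂ) - 2)
  let x3 := R 3 / (n : ℂ)
  let x4 := R 4 / (n : ℂ)
  let u := R 0 - x1 - x3 + x4
  let v := R 2 + x3 - x4 - x1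
  ![(((n : ℂ) + 1) * u + v) / ((n : ℂ) * ((n : ℂ) + 2)), x1,
    (((n : ℂ) + 1) * v + u) / ((n : ℂ) * ((n : ℂ) + 2)), x3, x4]

lemma level_solve {n : ℤ} (hn : 1 ≤ n) {R : Fin 5 → ℂ} (d : ℂ) (hR : n = 2 → R 1 = 0) :
    LevelA4 n (solveA4 n R d) R := by
  have n0 : (n : ℂ) ≠ 0 := by exact_mod_cast (by omega : n ≠ 0)
  have n2 : (n : ℂ) + 2 ≠ 0 := by exact_mod_cast (by omega : n + 2 ≠ 0)
  have hx1 : ((n : ℂ) - 2) * (if n = 2 then d else R 1 / ((n : ℂ) - 2)) = R 1 := by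
    split_ifs with h
    · rw [hR h, h]
      simp
    · have : (n : ℂ) - 2 ≠ 0 := by exact_mod_cast (by omega : n - 2 ≠ 0)
      field_simp
  simp only [LevelA4, solveA4]
  refine ⟨?_, hx1, ?_, ?_, ?_⟩ <;>
    generalize (if n = 2 then d else R 1 / ((n : ℂ) - 2)) = x1 <;> simp <;> field_simp <;> ring

lemma eq_solve {n : ℤ} (hn : 1 ≤ n) {x R : Fin 5 → ℂ} {d : ℂ} (h : LevelA4 n x R)
    (hd : n = 2 → x 1 = d) : x = solveA4 n R d := by
  have n0 : (n : ℂ) ≠ 0 := by exact_mod_cast (by omega : n ≠ 0)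
  have n2 : (n : ℂ) + 2 ≠ 0 := by exact_mod_cast (by omega : n + 2 ≠ 0)
  obtain ⟨e0, e1, e2, e3, e4⟩ := h
  have hx1 : (if n = 2 then d else R 1 / ((n : ℂ) - 2)) = x 1 := by
    split_ifs with h
    · exact (hd h).symm
    · have : (n : ℂ) - 2 ≠ 0 := by exact_mod_cast (by omega : n - 2 ≠ 0)
      rw [← e1]
      field_simp
  have hx3 : R 3 / (n : ℂ) = x 3 := by rw [← e3]; field_simp
  have hx4 : R 4 / (n : ℂ) = x 4 := by rw [← e4]; field_simp
  simp only [solveA4, hx1, hx3, hx4]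
  funext i
  fin_cases i
  · simp
    rw [← e0, ← e2]
    field_simp
    ring
  · rfl
  · simp
    rw [← e0, ← e2]
    field_simp
    ring
  · rfl
  · rfl

lemma level_zero {α : Fin 5 → ℂ} {c : Fin 5 → ℤ → ℂ} :
    LevelA4 0 (fun i => c i 0) (fun i => restA4 α c i 0) ↔
      c 1 0 = 0 ∧ c 4 0 - c 0 0 = c 3 0 - c 2 0 := by
  simp only [LevelA4, restA4]
  simp
  constructor
  · rintro ⟨e0, e1, -⟩
    exact ⟨e1, by linear_combination -e0 + e1⟩
  · rintro ⟨e1, e2⟩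
    exact ⟨by linear_combination -e2 + e1, e1, by linear_combination e2 + e1⟩

lemma rest_one {α : Fin 5 → ℂ} {c : Fin 5 → ℤ → ℂ} (h : c 1 0 = 0) :
    restA4 α c 1 1 = α 1 := by
  simp [restA4, h]

/-- The compatibility condition at the resonance `n = 2`. -/
lemma rest_two {α : Fin 5 → ℂ} {c : Fin 5 → ℤ → ℂ} (h : c 1 0 = 0)
    (h' : c 4 0 - c 0 0 = c 3 0 - c 2 0) : restA4 α c 1 2 = 0 := by
  have hI : Finset.Icc (0 : ℤ) (2 - 1) = {0, 1} := by decide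
  rw [restA4, hI, Finset.sum_pair (by norm_num), h]
  simp
  right
  linear_combination h'

/-- The truncations of the solution: `approxA4 α a b cc d N` has the right coefficients up to index
`N`, and zeros beyond. -/
noncomputable def approxA4 (α : Fin 5 → ℂ) (a b cc d : ℂ) : ℕ → Fin 5 → ℤ → ℂ
  | 0 => fun i n =>
      if n = -1 then ![-1, 0, 1, 0, 0] i
      else if n = 0 then ![a, 0, b, cc, a + cc - b] i else 0
  | N + 1 => fun i n =>
      if n = (N : ℤ) + 1 then
        solveA4 ((N : ℤ) + 1) (fun j => restA4 α (approxA4 α a b cc d N) j ((N : ℤ) + 1)) d i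
      else approxA4 α a b cc d N i n

/-- The formal solution, with coefficients read off from the truncations. All coefficients of
negative index come from the truncation at `0`, since `n.toNat = 0` there. -/
noncomputable def solA4 (α : Fin 5 → ℂ) (a b cc d : ℂ) (i : Fin 5) (n : ℤ) : ℂ :=
  approxA4 α a b cc d n.toNat i n

lemma approx_eq_sol (α : Fin 5 → ℂ) (a b cc d : ℂ) (N : ℕ) (i : Fin 5) (n : ℤ)
    (hn : n ≤ N) : approxA4 α a b cc d N i n = solA4 α a b cc d i n := by
  induction N with
  | zero => rw [solA4, Int.toNat_of_nonpos (by simpa using hn)]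
  | succ N ih =>
    by_cases h : n = (N : ℤ) + 1
    · have : n.toNat = N + 1 := by omega
      rw [solA4, this]
    · rw [← ih (by push_cast at hn; omega), approxA4]
      exact if_neg h

lemma sol_step (α : Fin 5 → ℂ) (a b cc d : ℂ) {n : ℤ} (hn : 1 ≤ n) :
    (fun i => solA4 α a b cc d i n) =
      solveA4 n (fun j => restA4 α (solA4 α a b cc d) j n) d := by
  obtain ⟨N, rfl⟩ : ∃ N : ℕ, n = (N : ℤ) + 1 := ⟨(n - 1).toNat, by omega⟩
  funext i
  have hr : (fun j => restA4 α (approxA4 α a b cc d N) j ((N : ℤ) + 1)) =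
      fun j => restA4 α (solA4 α a b cc d) j ((N : ℤ) + 1) :=
    funext fun j => restA4_congr (fun i k _ hk => approx_eq_sol _ _ _ _ _ _ _ _ (by omega)) j
  rw [← approx_eq_sol α a b cc d (N + 1) i _ (by push_cast; rfl), ← hr, approxA4]
  exact if_pos rfl

/-- For each `α ∈ ℂ⁵` and `(a,b,c,d) ∈ ℂ⁴` there is a unique formal
meromorphic solution of the `A₄⁽¹⁾` system of pole order 1 with residue vector
`(−1,0,1,0,0)` and `c₀⁰ = a`, `c₀² = b`, `c₀³ = c`, `c₂¹ = d`; moreover every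
pole-order-1 formal solution with this residue vector satisfies `c₀¹ = 0`,
`c₀⁴ − c₀⁰ = c₀³ − c₀²` and `c₁¹ = −α₁`. -/
theorem formalSol_type1_A4 (α : Fin 5 → ℂ) (a b cc d : ℂ) :
    (∃! c : Fin 5 → ℤ → ℂ,
      IsFormalMeromSolA4 α 1 c ∧
      c 0 (-1) = -1 ∧ c 1 (-1) = 0 ∧ c 2 (-1) = 1 ∧ c 3 (-1) = 0 ∧
        c 4 (-1) = 0 ∧
      c 0 0 = a ∧ c 2 0 = b ∧ c 3 0 = cc ∧ c 1 2 = d) ∧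
    (∀ c : Fin 5 → ℤ → ℂ,
      IsFormalMeromSolA4 α 1 c →
      c 0 (-1) = -1 → c 1 (-1) = 0 → c 2 (-1) = 1 → c 3 (-1) = 0 →
        c 4 (-1) = 0 →
      c 1 0 = 0 ∧ c 4 0 - c 0 0 = c 3 0 - c 2 0 ∧ c 1 1 = -α 1) := by
  constructor
  · refine ⟨solA4 α a b cc d, ?_, ?_⟩
    · have r (i : Fin 5) : solA4 α a b cc d i (-1) = ![-1, 0, 1, 0, 0] i := by
        simp [solA4, approxA4]
      have z (i : Fin 5) : solA4 α a b cc d i 0 = ![a, 0, b, cc, a + cc - b] i := by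
        simp [solA4, approxA4]
      have z1 : solA4 α a b cc d 1 0 = 0 := z 1
      have z2 : solA4 α a b cc d 4 0 - solA4 α a b cc d 0 0 =
          solA4 α a b cc d 3 0 - solA4 α a b cc d 2 0 := by
        simp only [z]
        simp
        ring
      refine ⟨(formal_iff_level (r 0) (r 1) (r 2) (r 3) (r 4)).2 ⟨fun i n hn => ?_, fun n hn => ?_⟩,
        r 0, r 1, r 2, r 3, r 4, z 0, z 2, z 3, ?_⟩
      · rw [solA4, Int.toNat_of_nonpos (by omega), approxA4]
        beta_reduce
        rw [if_neg (by omega), if_neg (by omega)]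
      · rcases hn.eq_or_lt with rfl | hn
        · exact level_zero.2 ⟨z1, z2⟩
        · rw [sol_step α a b cc d hn]
          refine level_solve hn d ?_
          rintro rfl
          exact rest_two z1 z2
      · have := congrFun (sol_step α a b cc d (n := 2) (by norm_num)) 1
        simpa [solveA4] using this
    · rintro c ⟨hc, r0, r1, r2, r3, r4, ha, hb, hcc, hd⟩
      obtain ⟨hs, hl⟩ := (formal_iff_level r0 r1 r2 r3 r4).1 hc
      obtain ⟨z1, z4⟩ := level_zero.1 (hl 0 le_rfl)
      have neg : ∀ (i : Fin 5) (n : ℤ), n ≤ 0 → c i n = solA4 α a b cc d i n := by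
        intro i n hn
        rw [solA4, Int.toNat_of_nonpos hn, approxA4]
        beta_reduce
        split_ifs with h1 h2
        · subst h1
          fin_cases i <;> simp [r0, r1, r2, r3, r4]
        · subst h2
          fin_cases i
          · exact ha
          · exact z1
          · exact hb
          · exact hcc
          · change c 4 0 = a + cc - b
            rw [← ha, ← hb, ← hcc]
            linear_combination z4
        · exact hs i n (by omega)
      have main : ∀ (N : ℕ) (i : Fin 5) (n : ℤ), n ≤ N → c i n = solA4 α a b cc d i n := by
        intro N
        induction N with
        | zero => exact fun i n hn => neg i n (by simpa using hn)
        | succ N ih =>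
          intro i n hn
          push_cast at hn
          rcases hn.eq_or_lt with rfl | hn
          · have h1 : (1 : ℤ) ≤ (N : ℤ) + 1 := by omega
            have h := eq_solve h1 (d := d) (hl ((N : ℤ) + 1) (by omega))
              (by intro h; simpa only [h] using hd)
            have hr : (fun j => restA4 α c j ((N : ℤ) + 1)) =
                fun j => restA4 α (solA4 α a b cc d) j ((N : ℤ) + 1) :=
              funext fun j => restA4_congr (fun i k _ hk => ih i k (by omega)) j
            rw [hr, ← sol_step α a b cc d h1] at h
            exact congrFun h i
          · exact ih i n (by omega)
      funext i n
      exact main n.toNat i n (by omega)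
  · intro c hc r0 r1 r2 r3 r4
    have hl := ((formal_iff_level r0 r1 r2 r3 r4).1 hc).2
    obtain ⟨z1, z4⟩ := level_zero.1 (hl 0 le_rfl)
    refine ⟨z1, z4, ?_⟩
    have h := (hl 1 (by norm_num)).2.1
    beta_reduce at h
    rw [rest_one z1] at h
    push_cast at h
    linear_combination -h
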